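/- arXiv:math/0305352 — 5 statements merged into one kernel-verified Lean document; each statement's English description precedes it below -/
import Mathlib

section
/- The free product of a residually finite group and a group satisfying the Følner condition is sofic. That is, if G is residually finite and H satisfies the Følner condition, then G ∗ H is sofic. -/
/-- Two self-maps of a finite set `A` are `ε`-similar if the number of points where they
differ is at most `ε·|A|`. They are `(1-ε)`-different if they are not `(1-ε)`-similar. -/
def EpsSimilar {A : Type*} [Fintype A] (ε : ℝ) (e f : A → A) : Prop :=
  (Nat.card {a : A // e a ≠ f a} : ℝ) ≤ ε * Fintype.card A

/-- An `(F, ε)`-quasi-action of a group `G` on a finite set `A`: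
(a) `φ(ef)` is `ε`-similar to `φ(e)` followed by `φ(f)` for `e, f ∈ F`;
(b) `φ(1)` is `ε`-similar to the identity;
(c) for `1 ≠ e ∈ F`, `φ(e)` is `(1-ε)`-different from the identity. -/
def IsQuasiAction {G : Type*} [Group G] (F : Finset G) (ε : ℝ)
    {A : Type*} [Fintype A] (φ : G → A → A) : Prop :=
  (∀ e ∈ F, ∀ f ∈ F, EpsSimilar ε (φ (e * f)) (fun a => φ f (φ e a))) ∧
  EpsSimilar ε (φ 1) id ∧
  (∀ e ∈ F, e ≠ 1 → ¬ EpsSimilar (1 - ε) (φ e) id)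

/-- A group `G` is sofic if for every finite subset `F ⊆ G` and every `ε ∈ (0,1)` there is an
`(F, ε)`-quasi-action of `G` on some finite nonempty set. -/
def IsSofic (G : Type*) [Group G] : Prop :=
  ∀ (F : Finset G) (ε : ℝ), 0 < ε → ε < 1 →
    ∃ (A : Type) (_ : Fintype A) (_ : Nonempty A) (φ : G → A → A),
      IsQuasiAction F ε φ

/-- A group `M` satisfies the Følner condition (is amenable as a discrete group) if for every
finite `F ⊆ M` and every `ε > 0` there is a nonempty finite `A ⊆ M` with
`|A·g \ A| ≤ ε·|A|` for all `g ∈ F`. -/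
def FolnerCondition (M : Type*) [Group M] : Prop :=
  ∀ (F : Finset M) (ε : ℝ), 0 < ε →
    ∃ A : Finset M, A.Nonempty ∧
      ∀ g ∈ F, ((((fun a => a * g) '' (A : Set M)) \ (A : Set M)).ncard : ℝ) ≤ ε * A.card

open Classical in
/-- The involutions on the set of reduced words. -/
noncomputable def togg {X : Type*} (N : ℕ) (x : X) (l : List X) : List X :=
  if l.head? = some x then l.tail else if l.length < N then x :: l else l

/-- Reduced words of bounded length. -/
def Wd (X : Type*) (N : ℕ) : Type _ := {l : List X // l.IsChain (· ≠ ·) ∧ l.length ≤ N}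

lemma togg_mem {X : Type*} (N : ℕ) (x : X) (l : List X)
    (h : l.IsChain (· ≠ ·) ∧ l.length ≤ N) :
    (togg N x l).IsChain (· ≠ ·) ∧ (togg N x l).length ≤ N := by
  unfold togg
  split_ifs with h1 h2
  · refine ⟨h.1.tail, ?_⟩
    rw [List.length_tail]; omega
  · refine ⟨?_, by simpa using h2⟩
    rw [List.isChain_cons]
    refine ⟨?_, h.1⟩
    rintro y hy rfl
    exact h1 hy
  · exact h

lemma togg_togg {X : Type*} (N : ℕ) (x : X) (l : List X)
    (h : l.IsChain (· ≠ ·) ∧ l.length ≤ N) : togg N x (togg N x l) = l := by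
  rcases l with _ | ⟨y, l⟩
  · unfold togg
    by_cases hN : 0 < N <;> simp [hN]
  · by_cases hxy : y = x
    · subst hxy
      have h1 : l.head? ≠ some y := by
        intro h2
        have := (List.isChain_cons.1 h.1).1 y h2
        exact this rfl
      have h3 : l.length < N := by have := h.2; simp at this; omega
      simp [togg, h1, h3]
    · by_cases hN : (y :: l).length < N
      · have : l.length + 1 < N := by simpa using hN
        simp [togg, hxy, this]
      · have : ¬ l.length + 1 < N := by simpa using hN
        simp [togg, hxy, this]

lemma exists_free_involutions (X : Type*) [Finite X] (N : ℕ) :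
    ∃ (P : Type) (_ : Group P) (_ : Finite P) (s : X → P), (∀ x, s x * s x = 1) ∧
      ∀ l : List X, l.IsChain (· ≠ ·) → l ≠ [] → l.length ≤ N → (l.map s).prod ≠ 1 := by
  haveI : Finite (Wd X N) := by
    haveI : Finite {l : List X // l.length ≤ N} := (List.finite_length_le X N)
    refine Finite.of_injective (β := {l : List X // l.length ≤ N}) (fun l => ⟨l.1, l.2.2⟩) ?_
    intro a b hab
    exact Subtype.ext (Subtype.mk.inj hab)
  obtain ⟨n, ⟨e⟩⟩ := Finite.exists_equiv_fin (Wd X N)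
  let s0 : X → Equiv.Perm (Wd X N) := fun x =>
    { toFun := fun l => ⟨togg N x l.1, togg_mem N x l.1 l.2⟩
      invFun := fun l => ⟨togg N x l.1, togg_mem N x l.1 l.2⟩
      left_inv := fun l => Subtype.ext (togg_togg N x l.1 l.2)
      right_inv := fun l => Subtype.ext (togg_togg N x l.1 l.2) }
  have hs0 : ∀ x, s0 x * s0 x = 1 := fun x =>
    Equiv.ext fun l => Subtype.ext (togg_togg N x l.1 l.2)
  let nl : Wd X N := ⟨[], by simp⟩
  have key : ∀ l : List X, l.IsChain (· ≠ ·) → l.length ≤ N →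
      (((l.map s0).prod) nl).1 = l := by
    intro l
    induction l with
    | nil => intro _ _; rfl
    | cons x l ih =>
      intro hc hl
      have hl' : l.length < N := by simp at hl; omega
      have := ih hc.tail hl'.le
      have h1 : l.head? ≠ some x := by
        intro h2
        exact (List.isChain_cons.1 hc).1 x h2 rfl
      rw [List.map_cons, List.prod_cons, Equiv.Perm.mul_apply]
      change togg N x _ = _
      rw [this]
      simp [togg, h1, hl']
  let E : Equiv.Perm (Wd X N) ≃* Equiv.Perm (Fin n) := e.permCongrHom
  refine ⟨Equiv.Perm (Fin n), inferInstance, inferInstance, fun x => E (s0 x), ?_, ?_⟩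
  · intro x; rw [← map_mul, hs0, map_one]
  · intro l hc hne hl h
    have h2 : (l.map s0).prod = 1 := by
      apply E.injective
      rw [map_one, map_list_prod, List.map_map]
      exact h
    have := key l hc hl
    rw [h2] at this
    exact hne this.symm

lemma exists_finite_quotient {G : Type*} [Group G]
    (hG : ∀ g : G, g ≠ 1 → ∃ (K : Type) (_ : Group K) (_ : Finite K) (φ : G →* K), φ g ≠ 1)
    (S : Finset G) :
    ∃ (K : Type) (_ : Group K) (_ : Finite K) (φ : G →* K), ∀ g ∈ S, g ≠ 1 → φ g ≠ 1 := by
  classical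
  induction S using Finset.induction_on with
  | empty => exact ⟨Unit, inferInstance, inferInstance, 1, by simp⟩
  | insert a S ha ih =>
    obtain ⟨K, _, _, φ, h⟩ := ih
    by_cases ha1 : a = 1
    · refine ⟨K, inferInstance, inferInstance, φ, ?_⟩
      intro g hg hg1
      rcases Finset.mem_insert.1 hg with rfl | hg
      · exact absurd ha1 hg1
      · exact h g hg hg1
    · obtain ⟨K', _, _, ψ, hψ⟩ := hG a ha1
      refine ⟨K × K', inferInstance, inferInstance, φ.prod ψ, ?_⟩
      intro g hg hg1 hh
      have h1 : φ g = 1 := congrArg Prod.fst hh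
      have h2 : ψ g = 1 := congrArg Prod.snd hh
      rcases Finset.mem_insert.1 hg with rfl | hg
      · exact hψ h2
      · exact h g hg hg1 h1

/-- A letter is nontrivial. -/
def NonTriv {G H : Type*} [Group G] [Group H] (a : G ⊕ H) : Prop :=
  a ≠ Sum.inl 1 ∧ a ≠ Sum.inr 1

/-- Alternating lists of nontrivial letters. -/
def Red {G H : Type*} [Group G] [Group H] (L : List (G ⊕ H)) : Prop :=
  L.IsChain (fun a b => a.isLeft ≠ b.isLeft) ∧ ∀ a ∈ L, NonTriv a

/-- Value of a letter in the free product. -/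
def lval {G H : Type*} [Group G] [Group H] : G ⊕ H → Monoid.Coprod G H :=
  Sum.elim Monoid.Coprod.inl Monoid.Coprod.inr

lemma red_cons {G H : Type*} [Group G] [Group H] (a : G ⊕ H) (L : List (G ⊕ H))
    (hL : Red L) : ∃ L' : List (G ⊕ H), Red L' ∧ (L'.map lval).prod = lval a * (L.map lval).prod := by
  by_cases ha : NonTriv a
  · rcases L with _ | ⟨b, L⟩
    · exact ⟨[a], ⟨by simp, by simpa using ha⟩, by simp⟩
    · have hLL : Red L := ⟨hL.1.tail, fun x hx => hL.2 x (List.mem_cons_of_mem _ hx)⟩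
      by_cases hab : a.isLeft = b.isLeft
      · have : ∃ c : G ⊕ H, lval c = lval a * lval b ∧ c.isLeft = b.isLeft := by
          rcases a with a | a <;> rcases b with b | b
          · exact ⟨Sum.inl (a * b), by simp [lval], rfl⟩
          · simp at hab
          · simp at hab
          · exact ⟨Sum.inr (a * b), by simp [lval], rfl⟩
        obtain ⟨c, hc, hcl⟩ := this
        by_cases hcn : NonTriv c
        · refine ⟨c :: L, ⟨?_, ?_⟩, by simp [hc, mul_assoc]⟩
          · rw [List.isChain_cons]
            refine ⟨fun y hy => ?_, hLL.1⟩
            rw [hcl]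
            exact (List.isChain_cons.1 hL.1).1 y hy
          · intro x hx
            rcases List.mem_cons.1 hx with rfl | hx
            · exact hcn
            · exact hLL.2 x hx
        · refine ⟨L, hLL, ?_⟩
          have : lval c = 1 := by
            unfold NonTriv at hcn
            by_cases h1 : c = Sum.inl 1
            · rw [h1]; simp [lval]
            · by_cases h2 : c = Sum.inr 1
              · rw [h2]; simp [lval]
              · exact absurd ⟨h1, h2⟩ hcn
          rw [List.map_cons, List.prod_cons, ← mul_assoc, ← hc, this, one_mul]
      · refine ⟨a :: b :: L, ⟨?_, ?_⟩, by simp⟩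
        · rw [List.isChain_cons]
          refine ⟨fun y hy => ?_, hL.1⟩
          simp at hy
          subst hy
          exact hab
        · intro x hx
          rcases List.mem_cons.1 hx with rfl | hx
          · exact ha
          · exact hL.2 x hx
  · refine ⟨L, hL, ?_⟩
    have : lval a = 1 := by
      unfold NonTriv at ha
      by_cases h1 : a = Sum.inl 1
      · rw [h1]; simp [lval]
      · by_cases h2 : a = Sum.inr 1
        · rw [h2]; simp [lval]
        · exact absurd ⟨h1, h2⟩ ha
    rw [this, one_mul]

lemma exists_red {G H : Type*} [Group G] [Group H] (w : Monoid.Coprod G H) :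
    ∃ L : List (G ⊕ H), Red L ∧ (L.map lval).prod = w := by
  have key : ∀ w : Monoid.Coprod G H, ∀ L : List (G ⊕ H), Red L →
      ∃ L' : List (G ⊕ H), Red L' ∧ (L'.map lval).prod = w * (L.map lval).prod := by
    intro w
    induction w using Monoid.Coprod.induction_on with
    | inl g => exact fun L hL => red_cons (Sum.inl g) L hL
    | inr h => exact fun L hL => red_cons (Sum.inr h) L hL
    | mul x y hx hy =>
      intro L hL
      obtain ⟨L1, h1, h1'⟩ := hy L hL
      obtain ⟨L2, h2, h2'⟩ := hx L1 h1
      exact ⟨L2, h2, by rw [h2', h1', mul_assoc]⟩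
  obtain ⟨L, h, h'⟩ := key w [] ⟨by simp, by simp⟩
  exact ⟨L, h, by simpa using h'⟩

section model
variable {G H K P C : Type*} [Group G] [Group H] [Group K] [Group P]

/-- one letter acting on the model -/
def stp (q : G →* K) (c : H → C) (s : K × C → P) : G ⊕ H → K × H × P → K × H × P
  | Sum.inl g, x => (x.1 * q g, x.2.1, x.2.2)
  | Sum.inr b, x => (x.1, x.2.1 * b, x.2.2 * s (x.1, c x.2.1) * s (x.1, c (x.2.1 * b)))

lemma exists_action (q : G →* K) (c : H → C) (s : K × C → P) (hs : ∀ x, s x * s x = 1) :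
    ∃ r : Monoid.Coprod G H → K × H × P → K × H × P,
      (∀ x, r 1 x = x) ∧ (∀ e f x, r (e * f) x = r f (r e x)) ∧
      ∀ a x, r (lval a) x = stp q c s a x := by
  let ΘG : G →* (Function.End (K × H × P))ᵐᵒᵖ :=
    { toFun := fun g => MulOpposite.op (stp q c s (Sum.inl g))
      map_one' := by
        apply MulOpposite.unop_injective
        funext x
        change stp q c s (Sum.inl 1) x = x
        simp [stp]
      map_mul' := by
        intro a b
        apply MulOpposite.unop_injective
        funext x
        change stp q c s (Sum.inl (a * b)) x = stp q c s (Sum.inl b) (stp q c s (Sum.inl a) x)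
        simp [stp, mul_assoc] }
  let ΘH : H →* (Function.End (K × H × P))ᵐᵒᵖ :=
    { toFun := fun g => MulOpposite.op (stp q c s (Sum.inr g))
      map_one' := by
        apply MulOpposite.unop_injective
        funext x
        change stp q c s (Sum.inr 1) x = x
        simp [stp, mul_assoc, hs]
      map_mul' := by
        intro a b
        apply MulOpposite.unop_injective
        funext x
        have h2 : ∀ y z, s y * (s y * z) = z := fun y z => by rw [← mul_assoc, hs, one_mul]
        change stp q c s (Sum.inr (a * b)) x = stp q c s (Sum.inr b) (stp q c s (Sum.inr a) x)
        simp [stp, mul_assoc, h2] }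
  let Θ := Monoid.Coprod.lift ΘG ΘH
  refine ⟨fun w => (Θ w).unop, ?_, ?_, ?_⟩
  · intro x; simp only [map_one]; rfl
  · intro e f x; simp only [map_mul]; rfl
  · rintro (a | a) x
    · simp only [lval, Sum.elim_inl, Θ, Monoid.Coprod.lift_apply_inl]; rfl
    · simp only [lval, Sum.elim_inr, Θ, Monoid.Coprod.lift_apply_inr]; rfl

/-- the list of voltages -/
def volt (q : G →* K) (c : H → C) : List (G ⊕ H) → K → H → List (K × C)
  | [], _, _ => []
  | Sum.inl g :: L, k, h => volt q c L (k * q g) h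
  | Sum.inr b :: L, k, h => (k, c h) :: (k, c (h * b)) :: volt q c L k (h * b)

lemma volt_length (q : G →* K) (c : H → C) (L : List (G ⊕ H)) (k : K) (h : H) :
    (volt q c L k h).length ≤ 2 * L.length := by
  induction L generalizing k h with
  | nil => simp [volt]
  | cons a L ih =>
    rcases a with g | b
    · have := ih (k * q g) h
      simp [volt]; omega
    · have := ih k (h * b)
      simp [volt]; omega

/-- trajectory -/
def traj (q : G →* K) (c : H → C) (s : K × C → P) (L : List (G ⊕ H)) (x : K × H × P) :
    K × H × P := L.foldl (fun y a => stp q c s a y) x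

lemma traj_snd (q : G →* K) (c : H → C) (s : K × C → P) (L : List (G ⊕ H)) (x : K × H × P) :
    (traj q c s L x).2.2 = x.2.2 * ((volt q c L x.1 x.2.1).map s).prod := by
  induction L generalizing x with
  | nil => simp [traj, volt]
  | cons a L ih =>
    have h0 : traj q c s (a :: L) x = traj q c s L (stp q c s a x) := rfl
    rw [h0, ih]
    rcases a with g | b
    · simp [stp, volt]
    · simp [stp, volt, mul_assoc]

/-- the trajectory stays over `A` -/
def stays (A : Set H) : List (G ⊕ H) → H → Prop
  | [], h => h ∈ A
  | Sum.inl _ :: L, h => stays A L h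
  | Sum.inr b :: L, h => h ∈ A ∧ stays A L (h * b)

lemma stays_mem (A : Set H) (L : List (G ⊕ H)) (h : H) (hs : stays A L h) : h ∈ A := by
  induction L with
  | nil => exact hs
  | cons a L ih =>
    rcases a with g | b
    · exact ih hs
    · exact hs.1

lemma volt_chain (q : G →* K) (c : H → C) (A : Set H) (hc : Set.InjOn c A)
    (L : List (G ⊕ H)) (hL : Red L) (hq : ∀ g, Sum.inl g ∈ L → q g ≠ 1) (k : K) (h : H)
    (hst : stays A L h) :
    (volt q c L k h).IsChain (· ≠ ·) ∧ ∀ y ∈ (volt q c L k h).head?,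
      y.2 = c h ∧ (∀ b, L.head? = some (Sum.inr b) → y.1 = k) ∧
        (∀ g, L.head? = some (Sum.inl g) → y.1 ≠ k) := by
  induction L generalizing k h with
  | nil => simp [volt]
  | cons a L ih =>
    have hLL : Red L := ⟨hL.1.tail, fun x hx => hL.2 x (List.mem_cons_of_mem _ hx)⟩
    have hqq : ∀ g, Sum.inl g ∈ L → q g ≠ 1 := fun g hg => hq g (List.mem_cons_of_mem _ hg)
    have halt := (List.isChain_cons.1 hL.1).1
    rcases a with g | b
    · obtain ⟨h1, h2⟩ := ih hLL hqq (k * q g) h hst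
      refine ⟨h1, fun y hy => ?_⟩
      obtain ⟨h3, h4, h5⟩ := h2 y hy
      refine ⟨h3, by simp, fun g' _ => ?_⟩
      rcases L with _ | ⟨a', L⟩
      · simp [volt] at hy
      · rcases a' with g' | b
        · exact absurd rfl (halt (Sum.inl g') rfl)
        · rw [h4 b rfl]
          have := hq g (by simp)
          simpa using this
    · obtain ⟨h1, h2⟩ := ih hLL hqq k (h * b) hst.2
      have hb : b ≠ 1 := by
        intro hb
        exact (hL.2 (Sum.inr b) (by simp)).2 (by rw [hb])
      refine ⟨?_, ?_⟩
      · change List.IsChain _ ((k, c h) :: (k, c (h * b)) :: volt q c L k (h * b))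
        rw [List.isChain_cons_cons, List.isChain_cons]
        refine ⟨?_, ?_, h1⟩
        · intro he
          have := hc hst.1 (stays_mem A L _ hst.2) (congrArg Prod.snd he)
          exact hb (by simpa using this)
        · rintro y hy rfl
          obtain ⟨h3, h4, h5⟩ := h2 _ hy
          rcases L with _ | ⟨a', L⟩
          · simp [volt] at hy
          · rcases a' with g' | b'
            · exact h5 g' rfl rfl
            · exact absurd rfl (halt (Sum.inr b') rfl)
      · intro y hy
        simp [volt] at hy
        subst hy
        simp

lemma traj_ne (q : G →* K) (c : H → C) (s : K × C → P) (A : Set H) (hc : Set.InjOn c A) (N : ℕ)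
    (hs : ∀ l : List (K × C), l.IsChain (· ≠ ·) → l ≠ [] → l.length ≤ N → (l.map s).prod ≠ 1)
    (L : List (G ⊕ H)) (hL : Red L) (hne : L ≠ []) (hlen : 2 * L.length ≤ N)
    (hq : ∀ g, Sum.inl g ∈ L → q g ≠ 1) (x : K × H × P)
    (hst : stays A L x.2.1) : traj q c s L x ≠ x := by
  intro hx
  by_cases hv : volt q c L x.1 x.2.1 = []
  · rcases L with _ | ⟨a, L⟩
    · exact hne rfl
    · rcases a with g | b
      · rcases L with _ | ⟨a', L⟩
        · have : x.1 * q g = x.1 := congrArg Prod.fst hx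
          exact hq g (by simp) (by simpa using this)
        · rcases a' with g' | b
          · exact (List.isChain_cons.1 hL.1).1 (Sum.inl g') rfl rfl
          · simp [volt] at hv
      · simp [volt] at hv
  · have h1 := traj_snd q c s L x
    rw [hx] at h1
    exact hs _ (volt_chain q c A hc L hL hq x.1 x.2.1 hst).1 hv
      ((volt_length q c L _ _).trans hlen) (by simpa using h1.symm)

lemma stp_inj (q : G →* K) (c : H → C) (s : K × C → P) (a : G ⊕ H) :
    Function.Injective (stp q c s a) := by
  rintro ⟨k, h, p⟩ ⟨k', h', p'⟩ he
  rcases a with g | b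
  · simpa [stp] using he
  · simp only [stp, Prod.mk.injEq, mul_left_inj] at he
    obtain ⟨rfl, rfl, h3⟩ := he
    simpa using h3

lemma traj_mem_of_stays (q : G →* K) (c : H → C) (s : K × C → P) (A : Set H) (L : List (G ⊕ H))
    (x : K × H × P) (hst : stays A L x.2.1) : (traj q c s L x).2.1 ∈ A := by
  induction L generalizing x with
  | nil => exact hst
  | cons a L ih =>
    rcases a with g | b
    · exact ih _ hst
    · exact ih (stp q c s (Sum.inr b) x) hst.2

open Classical in
lemma stays_count (A : Finset H) (δ : ℝ) (hδ : 0 ≤ δ) (L : List (G ⊕ H))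
    (hA : ∀ b, Sum.inr b ∈ L → ((A.filter (fun a => a * b ∉ A)).card : ℝ) ≤ δ * A.card) :
    ((A.filter (fun a => ¬ stays (A : Set H) L a)).card : ℝ) ≤ L.length * (δ * A.card) := by
  induction L with
  | nil =>
    have : A.filter (fun a => ¬ stays (G := G) (A : Set H) [] a) = ∅ := by
      apply Finset.filter_eq_empty_iff.2
      intro a ha
      simpa [stays] using ha
    rw [this]; simp
  | cons a L ih =>
    have ih' := ih fun b hb => hA b (List.mem_cons_of_mem _ hb)
    have hpos : 0 ≤ δ * A.card := by positivity
    rcases a with g | b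
    · refine ih'.trans ?_
      push_cast [List.length_cons]
      nlinarith
    · have hb := hA b (by simp)
      have hsub : A.filter (fun a => ¬ stays (A : Set H) (Sum.inr b :: L) a) ⊆
          A.filter (fun a => a * b ∉ A) ∪
          (A.filter (fun a => ¬ stays (A : Set H) L a)).image (fun a => a * b⁻¹) := by
        intro a ha
        rw [Finset.mem_filter] at ha
        rw [Finset.mem_union]
        by_cases hab : a * b ∈ A
        · right
          refine Finset.mem_image.2 ⟨a * b, Finset.mem_filter.2 ⟨hab, fun h => ha.2 ⟨ha.1, h⟩⟩, by simp⟩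
        · left
          exact Finset.mem_filter.2 ⟨ha.1, hab⟩
      have h1 := (Finset.card_le_card hsub).trans (Finset.card_union_le _ _)
      have h2 := Finset.card_image_le (s := A.filter (fun a => ¬ stays (A : Set H) L a))
        (f := fun a => a * b⁻¹)
      have h3 : ((A.filter (fun a => ¬ stays (A : Set H) (Sum.inr b :: L) a)).card : ℝ) ≤
          (A.filter (fun a => a * b ∉ A)).card +
          (A.filter (fun a => ¬ stays (A : Set H) L a)).card := by
        exact_mod_cast h1.trans (Nat.add_le_add_left h2 _)
      push_cast [List.length_cons]
      linarith

end model

lemma epsSimilar_conj {A B : Type*} [Fintype A] [Fintype B] (E : A ≃ B) (ε : ℝ) (e f : A → A) :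
    EpsSimilar ε (fun b => E (e (E.symm b))) (fun b => E (f (E.symm b))) ↔ EpsSimilar ε e f := by
  unfold EpsSimilar
  rw [Fintype.card_congr E]
  have : Nat.card {b : B // E (e (E.symm b)) ≠ E (f (E.symm b))} = Nat.card {a : A // e a ≠ f a} :=
    Nat.card_congr (E.symm.subtypeEquiv (by simp))
  rw [this]

lemma isQuasiAction_conj {Γ A B : Type*} [Group Γ] [Fintype A] [Fintype B] (E : A ≃ B) (ε : ℝ)
    (F : Finset Γ) (φ : Γ → A → A) (h : IsQuasiAction F ε φ) :
    IsQuasiAction F ε (fun w b => E (φ w (E.symm b))) := by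
  obtain ⟨h1, h2, h3⟩ := h
  refine ⟨fun e he f hf => ?_, ?_, fun e he hne hh => h3 e he hne ?_⟩
  · have := (epsSimilar_conj E ε _ _).2 (h1 e he f hf)
    simpa using this
  · have := (epsSimilar_conj E ε _ _).2 h2
    have h0 : (fun b => E (id (E.symm b))) = id := by funext b; simp
    rwa [h0] at this
  · have h0 : (fun b => E (id (E.symm b))) = id := by funext b; simp
    rw [← h0] at hh
    exact (epsSimilar_conj E _ _ _).1 hh

lemma card_mono_sub {A : Type*} [Finite A] {p p' : A → Prop} (h : ∀ a, p a → p' a) :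
    Nat.card {a // p a} ≤ Nat.card {a // p' a} :=
  Nat.card_le_card_of_injective (Subtype.map id h) (Subtype.map_injective h Function.injective_id)

lemma quasi_of_action {Γ Ω : Type*} [Group Γ] [DecidableEq Ω] (r : Γ → Ω → Ω) (hr1 : ∀ x, r 1 x = x)
    (hr : ∀ e f x, r (e * f) x = r f (r e x)) (S : Finset Ω) (F : Finset Γ) (ε : ℝ)
    (hε : 0 < ε)
    (h1 : ∀ w ∈ F, ((S.filter (fun x => r w x ∉ S)).card : ℝ) ≤ ε / 2 * S.card)
    (h2 : ∀ w ∈ F, w ≠ 1 → ((S.filter (fun x => r w x ∉ S ∨ r w x = x)).card : ℝ) < ε * S.card) :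
    ∃ φ : Γ → S → S, IsQuasiAction F ε φ := by
  let φ : Γ → S → S := fun w x => if h : r w x ∈ S then ⟨r w x, h⟩ else x
  have hcount : ∀ (p : Ω → Prop) [DecidablePred p],
      Nat.card {a : S // p a} = (S.filter p).card := by
    intro p _
    have h0 : Nat.card {x // x ∈ S.filter p} = (S.filter p).card := by
      rw [Nat.card_eq_fintype_card, Fintype.card_coe]
    rw [← h0]
    exact Nat.card_congr ⟨fun a => ⟨a.1.1, Finset.mem_filter.2 ⟨a.1.2, a.2⟩⟩,
      fun a => ⟨⟨a.1, (Finset.mem_filter.1 a.2).1⟩, (Finset.mem_filter.1 a.2).2⟩,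
      fun a => rfl, fun a => rfl⟩
  refine ⟨φ, ?_, ?_, ?_⟩
  · intro e he f hf
    unfold EpsSimilar
    have hle : Nat.card {a : S // φ (e * f) a ≠ φ f (φ e a)} ≤
        Nat.card {a : S // r e a ∉ S ∨ (r e a ∈ S ∧ r f (r e a) ∉ S)} := by
      refine card_mono_sub (fun a ha => ?_)
      by_contra hcon
      push Not at hcon
      obtain ⟨hc1, hc2⟩ := hcon
      have hc3 := hc2 hc1
      apply ha
      have h4 : φ e a = ⟨r e a, hc1⟩ := by simp [φ, hc1]
      rw [h4]
      simp [φ, hr, hc3]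
    rw [hcount (fun a => r e a ∉ S ∨ (r e a ∈ S ∧ r f (r e a) ∉ S))] at hle
    have hsub : S.filter (fun a => r e a ∉ S ∨ (r e a ∈ S ∧ r f (r e a) ∉ S)) ⊆
        S.filter (fun x => r e x ∉ S) ∪ (S.filter (fun x => r f x ∉ S)).image (r e⁻¹) := by
      intro a ha
      rw [Finset.mem_filter] at ha
      rw [Finset.mem_union]
      rcases ha.2 with h | h
      · left; exact Finset.mem_filter.2 ⟨ha.1, h⟩
      · right
        refine Finset.mem_image.2 ⟨r e a, Finset.mem_filter.2 h, ?_⟩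
        rw [← hr]; simp [hr1]
    have h3 := (Finset.card_le_card hsub).trans (Finset.card_union_le _ _)
    have h4 := Finset.card_image_le (s := S.filter (fun x => r f x ∉ S)) (f := r e⁻¹)
    have h5 : (Nat.card {a : S // φ (e * f) a ≠ φ f (φ e a)} : ℝ) ≤
        (S.filter (fun x => r e x ∉ S)).card + (S.filter (fun x => r f x ∉ S)).card := by
      rw [← Nat.cast_add, Nat.cast_le]
      refine hle.trans (le_trans (le_of_eq ?_) (h3.trans (Nat.add_le_add_left h4 _)))
      congr
    have h6 := h1 e he
    have h7 := h1 f hf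
    rw [Fintype.card_coe]
    linarith
  · have h0 : φ 1 = id := by
      funext x
      simp [φ, hr1]
    rw [h0]
    unfold EpsSimilar
    simp
    positivity
  · intro e he hne hcon
    have h3 := h2 e he hne
    unfold EpsSimilar at hcon
    rw [Fintype.card_coe] at hcon
    have hle : Nat.card {a : S // ¬ (r e a ∉ S ∨ r e a = a)} ≤ Nat.card {a : S // φ e a ≠ id a} := by
      refine card_mono_sub (fun a ha hh => ?_)
      push Not at ha
      have h4 : φ e a = ⟨r e a, ha.1⟩ := by simp [φ, ha.1]
      rw [h4] at hh
      exact ha.2 (congrArg Subtype.val hh)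
    rw [hcount (fun a => ¬ (r e a ∉ S ∨ r e a = a))] at hle
    have h6 := Finset.card_filter_add_card_filter_not (s := S) (fun a => r e a ∉ S ∨ r e a = a)
    have h6' : ((S.filter (fun a => r e a ∉ S ∨ r e a = a)).card : ℝ) +
      (S.filter (fun a => ¬ (r e a ∉ S ∨ r e a = a))).card = S.card := by exact_mod_cast h6
    have hle' : ((S.filter (fun a => ¬ (r e a ∉ S ∨ r e a = a))).card : ℝ) ≤
      Nat.card {a : S // φ e a ≠ id a} := by
      rw [Nat.cast_le]
      refine le_trans (le_of_eq ?_) hle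
      congr
    linarith

/-- The free product of a residually finite group and a group satisfying the Følner
condition is sofic. -/
theorem isSofic_coprod_of_residuallyFinite_folner {G H : Type*} [Group G] [Group H]
    (hG : ∀ g : G, g ≠ 1 → ∃ (K : Type) (_ : Group K) (_ : Finite K) (φ : G →* K), φ g ≠ 1)
    (hH : FolnerCondition H) :
    IsSofic (Monoid.Coprod G H) := by
  classical
  intro F ε hε _
  choose W hWred hWprod using fun w : Monoid.Coprod G H => exists_red w
  let letters : Finset (G ⊕ H) := F.biUnion fun w => (W w).toFinset
  have hlet : ∀ w ∈ F, ∀ a ∈ W w, a ∈ letters := fun w hw a ha =>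
    Finset.mem_biUnion.2 ⟨w, hw, List.mem_toFinset.2 ha⟩
  let m : ℕ := F.sup fun w => (W w).length
  have hm : ∀ w ∈ F, (W w).length ≤ m := fun w hw =>
    Finset.le_sup (f := fun w => (W w).length) hw
  obtain ⟨K, _, _, q, hq⟩ := exists_finite_quotient hG letters.toLeft
  let δ : ℝ := ε / (2 * (m + 1))
  have hδ : 0 < δ := by positivity
  have hmδ : (m : ℝ) * δ ≤ ε / 2 := by
    have : ((m : ℝ) + 1) * δ = ε / 2 := by simp only [δ]; field_simp
    nlinarith
  obtain ⟨A, hAne, hA⟩ := hH letters.toRight δ hδ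
  have hA' : ∀ b ∈ letters.toRight,
      ((A.filter (fun a => a * b ∉ A)).card : ℝ) ≤ δ * A.card := by
    intro b hb
    refine le_trans (le_of_eq ?_) (hA b hb)
    rw [Nat.cast_inj]
    have : (((fun a => a * b) '' (A : Set H)) \ (A : Set H)) =
        (((A.filter (fun a => a * b ∉ A)).image (fun a => a * b) : Finset H) : Set H) := by
      ext y
      simp only [Set.mem_sdiff, Set.mem_image, Finset.mem_coe, Finset.mem_image, Finset.mem_filter]
      constructor
      · rintro ⟨⟨a, ha, rfl⟩, h⟩
        exact ⟨a, ⟨ha, h⟩, rfl⟩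
      · rintro ⟨a, ⟨ha, h⟩, rfl⟩
        exact ⟨⟨a, ha, rfl⟩, h⟩
    rw [this, Set.ncard_coe_finset, Finset.card_image_of_injective _ (mul_left_injective b)]
  let c : H → Option A := fun h => if hh : h ∈ A then some ⟨h, hh⟩ else none
  have hc : Set.InjOn c (A : Set H) := by
    intro a ha b hb hab
    have ha' : a ∈ A := ha
    have hb' : b ∈ A := hb
    simpa [c, ha', hb'] using hab
  obtain ⟨P, _, _, s, hs1, hs2⟩ := exists_free_involutions (K × Option A) (2 * m)
  obtain ⟨r, hr1, hr, hrl⟩ := exists_action q c s hs1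
  have hrtraj : ∀ L : List (G ⊕ H), ∀ x, r ((L.map lval).prod) x = traj q c s L x := by
    intro L
    induction L with
    | nil => intro x; simp [hr1, traj]
    | cons a L ih =>
      intro x
      rw [List.map_cons, List.prod_cons, hr, ih, hrl]; rfl
  have hrW : ∀ w x, r w x = traj q c s (W w) x := fun w x => by
    conv_lhs => rw [← hWprod w]
    exact hrtraj _ _
  haveI := Fintype.ofFinite K
  haveI := Fintype.ofFinite P
  let S : Finset (K × H × P) := Finset.univ ×ˢ (A ×ˢ Finset.univ)
  have hS : ∀ x, x ∈ S ↔ x.2.1 ∈ A := fun x => by simp [S]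
  have hScard : S.card = Fintype.card K * (A.card * Fintype.card P) := by
    simp [S, Finset.card_product]
  have hSne : S.Nonempty := by
    obtain ⟨a, ha⟩ := hAne
    exact ⟨(1, a, 1), (hS _).2 ha⟩
  have hSpos : (0 : ℝ) < S.card := by exact_mod_cast hSne.card_pos
  have hbad : ∀ w ∈ F, ((S.filter (fun x => ¬ stays (A : Set H) (W w) x.2.1)).card : ℝ) ≤
      ε / 2 * S.card := by
    intro w hw
    have he : S.filter (fun x => ¬ stays (A : Set H) (W w) x.2.1) =
        Finset.univ ×ˢ ((A.filter (fun a => ¬ stays (A : Set H) (W w) a)) ×ˢ Finset.univ) := by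
      ext x
      simp [S]
    have h1 := stays_count A δ hδ.le (W w) (fun b hb =>
      hA' b (Finset.mem_toRight.2 (hlet w hw _ hb)))
    have h2 : ((W w).length : ℝ) ≤ m := by exact_mod_cast hm w hw
    have h3 : ((W w).length : ℝ) * (δ * A.card) ≤ ε / 2 * A.card := by
      have : ((W w).length : ℝ) * δ ≤ ε / 2 := le_trans (by gcongr) hmδ
      rw [← mul_assoc]
      gcongr
    rw [he, hScard, Finset.card_product, Finset.card_product, Finset.card_univ, Finset.card_univ]
    push_cast
    calc (Fintype.card K : ℝ) * (((A.filter (fun a => ¬ stays (A : Set H) (W w) a)).card : ℝ) *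
          Fintype.card P) ≤ Fintype.card K * ((ε / 2 * A.card) * Fintype.card P) := by
            gcongr
            exact h1.trans h3
      _ = _ := by ring
  obtain ⟨φ, hφ⟩ := quasi_of_action r hr1 hr S F ε hε
    (by
      intro w hw
      refine le_trans ?_ (hbad w hw)
      rw [Nat.cast_le]
      apply Finset.card_le_card
      intro x hx
      replace hx := Finset.mem_filter.1 hx
      obtain ⟨hxS, hx⟩ := hx
      refine Finset.mem_filter.2 ⟨hxS, fun hst => ?_⟩
      apply hx
      rw [hS, hrW]
      exact traj_mem_of_stays q c s _ _ _ hst)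
    (by
      intro w hw hw1
      have hlt : ε / 2 * S.card < ε * S.card := by nlinarith
      refine lt_of_le_of_lt ?_ hlt
      refine le_trans ?_ (hbad w hw)
      rw [Nat.cast_le]
      apply Finset.card_le_card
      intro x hx
      replace hx := Finset.mem_filter.1 hx
      obtain ⟨hxS, hx⟩ := hx
      refine Finset.mem_filter.2 ⟨hxS, fun hst => ?_⟩
      rcases hx with hx | hx
      · apply hx
        rw [hS, hrW]
        exact traj_mem_of_stays q c s _ _ _ hst
      · rw [hrW] at hx
        refine traj_ne q c s (A : Set H) hc (2 * m) hs2 (W w) (hWred w) ?_ ?_ ?_ x hst hx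
        · intro h0
          have := hWprod w
          rw [h0] at this
          exact hw1 (by simpa using this.symm)
        · have := hm w hw
          omega
        · intro g hg
          refine hq g (Finset.mem_toLeft.2 (hlet w hw _ hg)) ?_
          rintro rfl
          exact ((hWred w).2 _ hg).1 rfl)
  haveI : Nonempty S := hSne.to_subtype
  let E : S ≃ Fin (Fintype.card S) := Fintype.equivFin S
  exact ⟨Fin (Fintype.card S), inferInstance, ⟨E (Classical.arbitrary S)⟩, _,
    isQuasiAction_conj E ε F φ hφ⟩
end

section
/- Let K be a group generated by a symmetric set S (i.e., S = S⁻¹ and the subgroup generated by S is all of K). Let P be the group of finitary permutations of K (permutations of the set K that move only finitely many elements), and let Q be the subgroup of the symmetric group on the set K generated by P together with all left translations x ↦ gx for g ∈ K. Then Q is generated by the set W = S ∪ T_S, where the elements of S are viewed as the left translations x ↦ sx for s ∈ S, and T_S is the set of transpositions exchanging 1 and s for s ∈ S (and fixing all other elements of K). In particular, if S is finite then Q is finitely generated. -/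
/-- The group `Q` generated by the finitary permutations of a group `K` together with the left
translations: the subgroup of `Equiv.Perm K` generated by the permutations moving only finitely
many points and the maps `x ↦ g * x`. -/
def finitaryWithTranslations (K : Type*) [Group K] : Subgroup (Equiv.Perm K) :=
  Subgroup.closure
    ({σ : Equiv.Perm K | {x : K | σ x ≠ x}.Finite} ∪ Set.range fun g : K => Equiv.mulLeft g)

/-- Lemma: if `S` is a symmetric generating set of `K`, then `Q` (the group generated by the
finitary permutations and the left translations of `K`) is generated by
`W = S ∪ T_S`, where elements of `S` act as left translations and `T_S` consists of the
transpositions `(1, s)` for `s ∈ S`. In particular, if `S` is finite then `Q` is finitely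
generated. -/
theorem finitaryWithTranslations_eq_closure {K : Type*} [Group K] [DecidableEq K]
    (S : Set K) (hSsymm : ∀ s ∈ S, s⁻¹ ∈ S) (hSgen : Subgroup.closure S = ⊤) :
    finitaryWithTranslations K =
      Subgroup.closure
        ((fun s : K => Equiv.mulLeft s) '' S ∪ (fun s : K => Equiv.swap 1 s) '' S) ∧
    (S.Finite → (finitaryWithTranslations K).FG) := by
  set H := Subgroup.closure
        ((fun s : K => Equiv.mulLeft s) '' S ∪ (fun s : K => Equiv.swap 1 s) '' S) with hH
  have hL : ∀ g : K, Equiv.mulLeft g ∈ H := by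
    intro g
    have hg : g ∈ Subgroup.closure S := by rw [hSgen]; trivial
    induction hg using Subgroup.closure_induction with
    | mem x hx => exact Subgroup.subset_closure (Or.inl ⟨x, hx, rfl⟩)
    | one =>
      have : Equiv.mulLeft (1 : K) = 1 := by ext; simp
      rw [this]; exact H.one_mem
    | mul x y _ _ hx hy =>
      have : Equiv.mulLeft (x * y) = Equiv.mulLeft x * Equiv.mulLeft y := by
        ext; simp [mul_assoc]
      rw [this]; exact H.mul_mem hx hy
    | inv x _ hx =>
      have : Equiv.mulLeft x⁻¹ = (Equiv.mulLeft x)⁻¹ := by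
        rw [eq_inv_iff_mul_eq_one]; ext; simp
      rw [this]; exact H.inv_mem hx
  have hconj : ∀ g a b : K, Equiv.swap a b ∈ H → Equiv.swap (g * a) (g * b) ∈ H := by
    intro g a b h
    have : Equiv.swap (g * a) (g * b)
        = Equiv.mulLeft g * Equiv.swap a b * (Equiv.mulLeft g)⁻¹ := by
      rw [eq_mul_inv_iff_mul_eq, Equiv.mul_swap_eq_swap_mul]
      simp
    rw [this]
    exact H.mul_mem (H.mul_mem (hL g) h) (H.inv_mem (hL g))
  have hT : ∀ g : K, Equiv.swap 1 g ∈ H := by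
    intro g
    have hg : g ∈ Subgroup.closure S := by rw [hSgen]; trivial
    induction hg using Subgroup.closure_induction with
    | mem x hx => exact Subgroup.subset_closure (Or.inr ⟨x, hx, rfl⟩)
    | one => rw [Equiv.swap_self]; exact H.one_mem
    | mul x y _ _ hx hy =>
      have h := hconj x 1 y hy
      rw [mul_one] at h
      exact SubmonoidClass.swap_mem_trans H hx h
    | inv x _ hx =>
      have h := hconj x⁻¹ 1 x hx
      rw [mul_one, inv_mul_cancel, Equiv.swap_comm] at h
      exact h
  have hEq : finitaryWithTranslations K = H := by
    apply le_antisymm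
    · refine (Subgroup.closure_le _).2 ?_
      rintro σ (hσ | ⟨g, rfl⟩)
      · have h1 : σ ∈ Subgroup.closure {τ : Equiv.Perm K | τ.IsSwap} :=
          _root_.mem_closure_isSwap'.2 hσ
        refine (Subgroup.closure_le H).2 ?_ h1
        rintro τ ⟨a, b, _, rfl⟩
        have h := hconj a 1 (a⁻¹ * b) (hT _)
        rw [mul_one, mul_inv_cancel_left] at h
        exact h
      · exact hL g
    · refine (Subgroup.closure_le _).2 ?_
      rintro σ (⟨s, _, rfl⟩ | ⟨s, _, rfl⟩)
      · exact Subgroup.subset_closure (Or.inr ⟨s, rfl⟩)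
      · refine Subgroup.subset_closure (Or.inl ?_)
        refine (Set.toFinite ({1, s} : Set K)).subset ?_
        intro x hx
        by_contra hn
        simp only [Set.mem_insert_iff, Set.mem_singleton_iff, not_or] at hn
        exact hx (Equiv.swap_apply_of_ne_of_ne hn.1 hn.2)
  refine ⟨hEq, fun hS => ?_⟩
  rw [hEq, Subgroup.fg_iff]
  exact ⟨_, rfl, (hS.image _).union (hS.image _)⟩
end

section
/- Let K be a finitely generated residually finite group, let P be the group of finitary permutations of the set K, and let Q be the subgroup of the symmetric group on the set K generated by P together with all left translations x ↦ gx for g ∈ K. Then Q is sofic. -/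
/-- A group locally embeddable into finite transformation monoids is sofic. -/
lemma sofic_of_local {G : Type*} [Group G]
    (h : ∀ F : Finset G, ∃ (X : Type) (_ : Finite X) (ψ : G → X → X),
      (∀ e ∈ F, ∀ f ∈ F, ∀ x, ψ (e * f) x = ψ e (ψ f x)) ∧ (∀ x, ψ 1 x = x) ∧
      (∀ e ∈ F, e ≠ 1 → ∃ x, ψ e x ≠ x)) : IsSofic G := by
  classical
  intro F ε hε hε1
  obtain ⟨X, hX, ψ, hm, h1, hn⟩ := h (F ∪ F.image (fun g => g⁻¹))
  have := Fintype.ofFinite X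
  have hbij : ∀ e ∈ F, Function.Bijective (ψ e) := by
    intro e he
    have he1 : e ∈ F ∪ F.image (fun g => g⁻¹) := Finset.mem_union_left _ he
    have he2 : e⁻¹ ∈ F ∪ F.image (fun g => g⁻¹) :=
      Finset.mem_union_right _ (Finset.mem_image_of_mem _ he)
    refine Function.bijective_iff_has_inverse.2 ⟨ψ e⁻¹, fun x => ?_, fun x => ?_⟩
    · rw [← hm _ he2 _ he1, inv_mul_cancel, h1]
    · rw [← hm _ he1 _ he2, mul_inv_cancel, h1]
  let u : G → Equiv.Perm X := fun g =>
    if hg : Function.Bijective (ψ g) then Equiv.ofBijective _ hg else 1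
  have hu : ∀ g, Function.Bijective (ψ g) → ∀ x, u g x = ψ g x := by
    intro g hg x
    simp only [u, dif_pos hg, Equiv.ofBijective_apply]
  refine ⟨Equiv.Perm X, inferInstance, inferInstance, fun g a => a * u g, ?_, ?_, ?_⟩
  · intro e he f hf
    have hh : u (e * f) = u e * u f := by
      have hc : ψ (e * f) = ψ e ∘ ψ f := by
        funext x
        exact hm _ (Finset.mem_union_left _ he) _ (Finset.mem_union_left _ hf) x
      ext x
      rw [hu _ (by rw [hc]; exact (hbij e he).comp (hbij f hf)), Equiv.Perm.mul_apply,
        hu _ (hbij e he), hu _ (hbij f hf), hc]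
      rfl
    have : IsEmpty {a : Equiv.Perm X // a * u (e * f) ≠ a * u e * u f} :=
      ⟨fun ⟨a, ha⟩ => ha (by rw [hh, mul_assoc])⟩
    unfold EpsSimilar
    rw [Nat.card_of_isEmpty]
    push_cast
    positivity
  · have hh : u 1 = 1 := by
      have hc : ψ 1 = id := funext h1
      ext x
      rw [hu _ (by rw [hc]; exact Function.bijective_id), hc]
      rfl
    have : IsEmpty {a : Equiv.Perm X // a * u 1 ≠ id a} :=
      ⟨fun ⟨a, ha⟩ => ha (by rw [hh, mul_one]; rfl)⟩
    unfold EpsSimilar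
    rw [Nat.card_of_isEmpty]
    push_cast
    positivity
  · intro e he hne hs
    obtain ⟨x, hx⟩ := hn e (Finset.mem_union_left _ he) hne
    have hh : u e ≠ 1 := by
      intro h0
      apply hx
      rw [← hu _ (hbij e he), h0]
      rfl
    have hall : ∀ a : Equiv.Perm X, a * u e ≠ id a := by
      intro a ha
      exact hh (mul_eq_left.1 ha)
    unfold EpsSimilar at hs
    rw [Nat.card_congr (Equiv.subtypeUnivEquiv hall), Nat.card_eq_fintype_card] at hs
    have hp : (0 : ℝ) < Fintype.card (Equiv.Perm X) := by
      exact_mod_cast Fintype.card_pos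
    nlinarith

/-- Finitely many nontrivial elements survive in one finite quotient. -/
lemma exists_hom_ne_one {K : Type*} [Group K]
    (hrf : ∀ g : K, g ≠ 1 → ∃ (H : Type) (_ : Group H) (_ : Finite H) (φ : K →* H), φ g ≠ 1)
    (D : Finset K) : ∃ (H : Type) (_ : Group H) (_ : Finite H) (φ : K →* H),
      ∀ g ∈ D, g ≠ 1 → φ g ≠ 1 := by
  classical
  induction D using Finset.induction_on with
  | empty => exact ⟨Unit, inferInstance, inferInstance, 1, by simp⟩
  | insert a s ha ih =>
    obtain ⟨H, _, _, φ, hφ⟩ := ih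
    by_cases h1 : a = 1
    · refine ⟨H, inferInstance, inferInstance, φ, ?_⟩
      intro g hg hg1
      rcases Finset.mem_insert.1 hg with rfl | hg
      · exact absurd h1 hg1
      · exact hφ g hg hg1
    · obtain ⟨H', _, _, φ', hφ'⟩ := hrf a h1
      refine ⟨H × H', inferInstance, inferInstance, φ.prod φ', ?_⟩
      intro g hg hg1 h
      rw [MonoidHom.prod_apply, Prod.mk_eq_one] at h
      rcases Finset.mem_insert.1 hg with rfl | hg
      · exact hφ' h.2
      · exact hφ g hg hg1 h.1

lemma exists_hom_injOn {K : Type*} [Group K]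
    (hrf : ∀ g : K, g ≠ 1 → ∃ (H : Type) (_ : Group H) (_ : Finite H) (φ : K →* H), φ g ≠ 1)
    (W : Finset K) : ∃ (H : Type) (_ : Group H) (_ : Finite H) (φ : K →* H),
      ∀ x ∈ W, ∀ y ∈ W, φ x = φ y → x = y := by
  classical
  obtain ⟨H, i1, i2, φ, hφ⟩ :=
    exists_hom_ne_one hrf ((W ×ˢ W).image (fun p => p.1 * p.2⁻¹))
  refine ⟨H, i1, i2, φ, fun x hx y hy hxy => ?_⟩
  by_contra hne
  refine hφ (x * y⁻¹) (Finset.mem_image.2 ⟨(x, y), Finset.mem_product.2 ⟨hx, hy⟩, rfl⟩) ?_ ?_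
  · rwa [Ne, mul_inv_eq_one]
  · rw [map_mul, map_inv, hxy, mul_inv_cancel]

/-- Elements of `Q` agree with a translation off a finite set. -/
lemma exists_translation {K : Type*} [Group K] (q : finitaryWithTranslations K) :
    ∃ (g : K) (S : Finset K), ∀ x, x ∉ S → q.1 x = g * x := by
  classical
  obtain ⟨q, hq⟩ := q
  change ∃ (g : K) (S : Finset K), ∀ x, x ∉ S → q x = g * x
  unfold finitaryWithTranslations at hq
  induction hq using Subgroup.closure_induction with
  | mem x hx =>
    rcases hx with hx | ⟨g, rfl⟩
    · refine ⟨1, Set.Finite.toFinset hx, fun y hy => ?_⟩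
      simpa using hy
    · exact ⟨g, ∅, fun y _ => rfl⟩
  | one => exact ⟨1, ∅, fun y _ => by simp⟩
  | mul e f _ _ he hf =>
    obtain ⟨g, S, hS⟩ := he
    obtain ⟨g', S', hS'⟩ := hf
    refine ⟨g * g', S' ∪ S.image (fun y => f⁻¹ y), fun x hx => ?_⟩
    rw [Finset.mem_union, not_or] at hx
    rw [Equiv.Perm.mul_apply, hS, hS' x hx.1, mul_assoc]
    intro h
    exact hx.2 (Finset.mem_image.2 ⟨f x, h, by simp⟩)
  | inv e _ he =>
    obtain ⟨g, S, hS⟩ := he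
    refine ⟨g⁻¹, S.image (fun y => e y), fun x hx => ?_⟩
    have h1 : e⁻¹ x ∉ S := fun h => hx (Finset.mem_image.2 ⟨e⁻¹ x, h, by simp⟩)
    have h2 := hS _ h1
    rw [show e (e⁻¹ x) = x from e.apply_symm_apply x] at h2
    rw [eq_inv_mul_iff_mul_eq, ← h2]

/-- Lemma: if `K` is a finitely generated residually finite group, then the group `Q` generated
by the finitary permutations of `K` together with the left translations by elements of `K` is
sofic. -/
theorem isSofic_finitaryWithTranslations {K : Type*} [Group K] (hfg : Group.FG K)
    (hrf : ∀ g : K, g ≠ 1 → ∃ (H : Type) (_ : Group H) (_ : Finite H) (φ : K →* H), φ g ≠ 1) :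
    IsSofic (finitaryWithTranslations K) := by
  classical
  apply sofic_of_local
  intro F
  rcases finite_or_infinite K with hK | hK
  · obtain ⟨n, ⟨c⟩⟩ := Finite.exists_equiv_fin K
    refine ⟨Fin n, inferInstance, fun q x => c (q.1 (c.symm x)), ?_, ?_, ?_⟩
    · intro e _ f _ x
      simp
    · intro x
      simp
    · intro e _ hne
      by_contra! hcon
      apply hne
      ext x
      have h2 := hcon (c x)
      rw [c.symm_apply_apply] at h2
      exact c.injective h2
  choose g S hS using exists_translation (K := K)
  have avoid : ∀ T : Finset K, ∃ x, x ∉ T := fun T => Infinite.exists_notMem_finset T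
  have hg1 : g 1 = 1 := by
    obtain ⟨x, hx⟩ := avoid (S 1)
    have h2 := hS 1 x hx
    simpa using h2
  have hgm : ∀ e f, g (e * f) = g e * g f := by
    intro e f
    obtain ⟨x, hx⟩ := avoid (S (e * f) ∪ S f ∪ (S e).image (fun y => f.1⁻¹ y))
    simp only [Finset.mem_union, not_or] at hx
    obtain ⟨⟨hx1, hx2⟩, hx3⟩ := hx
    have h1 := hS _ x hx1
    have h2 := hS _ x hx2
    have h3 : f.1 x ∉ S e := fun h => hx3 (Finset.mem_image.2 ⟨f.1 x, h, by simp⟩)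
    have h4 := hS _ _ h3
    rw [h2] at h4
    have h5 : (e * f).1 x = e.1 (f.1 x) := rfl
    rw [h1, h2, h4, ← mul_assoc] at h5
    exact mul_right_cancel h5
  have hmv : ∀ q : finitaryWithTranslations K, ∃ x, q ≠ 1 → q.1 x ≠ x := by
    intro q
    by_contra! hcon
    exact (hcon 1).1 (by ext x; exact (hcon x).2)
  choose m hmv using hmv
  let F2 : Finset (finitaryWithTranslations K) :=
    insert 1 (F ∪ (F ×ˢ F).image (fun p => p.1 * p.2))
  have hF2 : ∀ e ∈ F, e ∈ F2 := fun e he => by simp [F2, he]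
  have hFF2 : ∀ e ∈ F, ∀ f ∈ F, e * f ∈ F2 := fun e he f hf =>
    Finset.mem_insert_of_mem (Finset.mem_union_right _
      (Finset.mem_image.2 ⟨(e, f), Finset.mem_product.2 ⟨he, hf⟩, rfl⟩))
  have h1F2 : 1 ∈ F2 := Finset.mem_insert_self _ _
  obtain ⟨S0, hS0⟩ : ∃ S0 : Finset K, S0 = F2.biUnion S := ⟨_, rfl⟩
  obtain ⟨W2, hW2⟩ : ∃ W : Finset K,
    W = S0 ∪ F.biUnion (fun f => S0.image (fun y => (g f)⁻¹ * y)) := ⟨_, rfl⟩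
  obtain ⟨W, hW⟩ : ∃ W : Finset K,
    W = W2 ∪ F.biUnion (fun f => W2.image (fun y => f.1 y)) ∪
      F.image m ∪ F.image (fun f => f.1 (m f)) := ⟨_, rfl⟩
  have hSS : ∀ q ∈ F2, ∀ x, x ∉ S0 → q.1 x = g q * x := by
    intro q hq x hx
    refine hS q x fun h => hx ?_
    rw [hS0]
    exact Finset.mem_biUnion.2 ⟨q, hq, h⟩
  have hS0W2 : ∀ x ∈ S0, x ∈ W2 := fun x hx => by rw [hW2]; exact Finset.mem_union_left _ hx
  have hgW2 : ∀ f ∈ F, ∀ x ∈ S0, (g f)⁻¹ * x ∈ W2 := fun f hf x hx => by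
    rw [hW2]
    exact Finset.mem_union_right _ (Finset.mem_biUnion.2 ⟨f, hf, Finset.mem_image_of_mem _ hx⟩)
  have hW2W : ∀ x ∈ W2, x ∈ W := fun x hx => by
    rw [hW]; simp only [Finset.mem_union]; exact Or.inl (Or.inl (Or.inl hx))
  have hfW : ∀ f ∈ F, ∀ x ∈ W2, f.1 x ∈ W := fun f hf x hx => by
    rw [hW]; simp only [Finset.mem_union]
    exact Or.inl (Or.inl (Or.inr
      (Finset.mem_biUnion.2 ⟨f, hf, Finset.mem_image.2 ⟨x, hx, rfl⟩⟩)))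
  have hmW : ∀ f ∈ F, m f ∈ W := fun f hf => by
    rw [hW]; simp only [Finset.mem_union]
    exact Or.inl (Or.inr (Finset.mem_image_of_mem _ hf))
  have hmW' : ∀ f ∈ F, f.1 (m f) ∈ W := fun f hf => by
    rw [hW]; simp only [Finset.mem_union]
    exact Or.inr (Finset.mem_image.2 ⟨f, hf, rfl⟩)
  obtain ⟨H, _, _, π, hπ⟩ := exists_hom_injOn hrf W
  let ψ : finitaryWithTranslations K → H → H := fun q h =>
    if hh : ∃ x ∈ S0, π x = h then π (q.1 hh.choose) else π (g q) * h
  have hψ1 : ∀ q ∈ F2, ∀ x ∈ W, ψ q (π x) = π (q.1 x) := by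
    intro q hq x hx
    by_cases hh : ∃ y ∈ S0, π y = π x
    · have h2 : hh.choose = x :=
        hπ _ (hW2W _ (hS0W2 _ hh.choose_spec.1)) _ hx hh.choose_spec.2
      simp only [ψ, dif_pos hh, h2]
    · simp only [ψ, dif_neg hh]
      rw [hSS q hq x (fun h => hh ⟨x, h, rfl⟩), map_mul]
  have hψ2 : ∀ q h, (¬ ∃ x ∈ S0, π x = h) → ψ q h = π (g q) * h := by
    intro q h hh
    simp only [ψ, dif_neg hh]
  refine ⟨H, inferInstance, ψ, ?_, ?_, ?_⟩
  · intro e he f hf h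
    by_cases hh : ∃ x ∈ W2, π x = h
    · obtain ⟨x, hx, rfl⟩ := hh
      rw [hψ1 _ (hFF2 e he f hf) x (hW2W x hx), hψ1 f (hF2 f hf) x (hW2W x hx),
        hψ1 e (hF2 e he) _ (hfW f hf x hx)]
      rfl
    · have h0 : ¬ ∃ x ∈ S0, π x = h := fun ⟨x, hx, hxh⟩ => hh ⟨x, hS0W2 x hx, hxh⟩
      have h3 : ¬ ∃ x ∈ S0, π x = π (g f) * h := by
        rintro ⟨x, hx, hxh⟩
        exact hh ⟨_, hgW2 f hf x hx, by rw [map_mul, hxh, map_inv, inv_mul_cancel_left]⟩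
      rw [hψ2 _ _ h0, hψ2 f _ h0, hψ2 e _ h3, hgm, map_mul, mul_assoc]
  · intro h
    by_cases hh : ∃ x ∈ S0, π x = h
    · obtain ⟨x, hx, rfl⟩ := hh
      rw [hψ1 1 h1F2 x (hW2W x (hS0W2 x hx))]
      rfl
    · rw [hψ2 _ _ hh, hg1, map_one, one_mul]
  · intro e he hne
    refine ⟨π (m e), fun h => hmv e hne ?_⟩
    rw [hψ1 e (hF2 e he) _ (hmW e he)] at h
    exact hπ _ (hmW' e he) _ (hmW e he) h
end

section
/- Let K be a finitely generated residually finite group, let P be the group of finitary permutations of the set K, and let Q be the subgroup of the symmetric group on the set K generated by P together with all left translations x ↦ gx for g ∈ K. Then Q is an LEF group: for every finite subset F ⊆ Q there exist a finite group H and a map Ψ : Q → H such that Ψ is injective on F and Ψ(fg) = Ψ(f)·Ψ(g) for all f, g ∈ F. -/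
theorem lefaux_sep {K : Type*} [Group K]
    (hrf : ∀ g : K, g ≠ 1 → ∃ (H : Type) (_ : Group H) (_ : Finite H) (φ : K →* H), φ g ≠ 1)
    (D : Set K) (hD : D.Finite) :
    ∃ (H : Type) (_ : Group H) (_ : Finite H) (φ : K →* H), ∀ d ∈ D, d ≠ 1 → φ d ≠ 1 := by
  induction D, hD using Set.Finite.induction_on with
  | empty => exact ⟨Unit, inferInstance, inferInstance, 1, by simp⟩
  | @insert a s _ _ ih =>
    obtain ⟨H, _, _, φ, hφ⟩ := ih
    by_cases ha : a = 1
    · refine ⟨H, inferInstance, inferInstance, φ, ?_⟩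
      rintro d (rfl | hd) h1
      · exact absurd ha h1
      · exact hφ d hd h1
    · obtain ⟨H', _, _, φ', hφ'⟩ := hrf a ha
      refine ⟨H × H', inferInstance, inferInstance, φ.prod φ', ?_⟩
      rintro d (rfl | hd) h1 h
      · exact hφ' (congrArg Prod.snd h)
      · exact hφ d hd h1 (congrArg Prod.fst h)

theorem lefaux_inj {K : Type*} [Group K]
    (hrf : ∀ g : K, g ≠ 1 → ∃ (H : Type) (_ : Group H) (_ : Finite H) (φ : K →* H), φ g ≠ 1)
    (T : Set K) (hT : T.Finite) :
    ∃ (H : Type) (_ : Group H) (_ : Finite H) (φ : K →* H), Set.InjOn φ T := by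
  obtain ⟨H, i1, i2, φ, h⟩ := lefaux_sep hrf (Set.image2 (fun a b => a * b⁻¹) T T)
    (hT.image2 _ hT)
  refine ⟨H, i1, i2, φ, fun a ha b hb hab => ?_⟩
  by_contra hne
  refine h (a * b⁻¹) ⟨a, ha, b, hb, rfl⟩ (fun h1 => hne (mul_inv_eq_one.mp h1)) ?_
  rw [map_mul, map_inv, hab, mul_inv_cancel]

theorem lefaux_ext {K H : Type*} [Group K] [Group H] [Finite H] (φ : K →* H) (B : Set K)
    (q : Equiv.Perm K) (k : K) (hq : ∀ x, x ∉ B → q x = k * x)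
    (hB : Set.InjOn φ B) (hqB : Set.InjOn φ (q '' B)) :
    ∃ τ : Equiv.Perm H, (∀ x ∈ B, τ (φ x) = φ (q x)) ∧
      ∀ y, (∀ x ∈ B, φ x ≠ y) → τ y = φ k * y := by
  classical
  let t : H → H := fun y => if h : ∃ x ∈ B, φ x = y then φ (q h.choose) else φ k * y
  have t1 : ∀ x ∈ B, t (φ x) = φ (q x) := by
    intro x hx
    have h : ∃ x' ∈ B, φ x' = φ x := ⟨x, hx, rfl⟩
    have e : h.choose = x := hB h.choose_spec.1 hx h.choose_spec.2
    simp only [t, dif_pos h, e]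
  have t2 : ∀ y, (∀ x ∈ B, φ x ≠ y) → t y = φ k * y := by
    intro y hy
    have h : ¬ ∃ x' ∈ B, φ x' = y := by push Not; exact hy
    simp only [t, dif_neg h]
  have key : ∀ x ∈ B, ∀ y, (∀ x ∈ B, φ x ≠ y) → φ (q x) ≠ φ k * y := by
    intro x hx y hy h
    have hm : k⁻¹ * q x ∈ B := by
      by_contra hn
      have := hq _ hn
      rw [mul_inv_cancel_left] at this
      exact hn (by rw [q.injective this]; exact hx)
    apply hy _ hm
    rw [map_mul, h, map_inv, inv_mul_cancel_left]
  have tinj : Function.Injective t := by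
    intro y y' h
    by_cases h1 : ∃ x ∈ B, φ x = y
    · obtain ⟨x, hx, rfl⟩ := h1
      rw [t1 x hx] at h
      by_cases h2 : ∃ x ∈ B, φ x = y'
      · obtain ⟨x', hx', rfl⟩ := h2
        rw [t1 x' hx'] at h
        rw [q.injective (hqB ⟨x, hx, rfl⟩ ⟨x', hx', rfl⟩ h)]
      · push Not at h2
        rw [t2 y' h2] at h
        exact absurd h (key x hx y' h2)
    · push Not at h1
      rw [t2 y h1] at h
      by_cases h2 : ∃ x ∈ B, φ x = y'
      · obtain ⟨x', hx', rfl⟩ := h2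
        rw [t1 x' hx'] at h
        exact absurd h.symm (key x' hx' y h1)
      · push Not at h2
        rw [t2 y' h2] at h
        exact mul_left_cancel h
  exact ⟨Equiv.ofBijective t (Finite.injective_iff_bijective.mp tinj), t1, t2⟩

theorem lefaux_comp {K : Type*} [Group K] (f g : Equiv.Perm K) (a b : K)
    (hf : {x | f x ≠ a * x}.Finite) (hg : {x | g x ≠ b * x}.Finite) :
    {x | (f * g) x ≠ a * b * x}.Finite := by
  refine (hg.union (hf.preimage (f := g) g.injective.injOn)).subset ?_
  intro x hx
  by_contra hn
  simp only [Set.mem_union, Set.mem_ofPred_eq, Set.mem_preimage, not_or, not_not] at hn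
  exact hx (by rw [Equiv.Perm.mul_apply, hn.2, hn.1, mul_assoc])

theorem lefaux_ex {K : Type*} [Group K] (q : Equiv.Perm K)
    (hq : q ∈ finitaryWithTranslations K) : ∃ k : K, {x | q x ≠ k * x}.Finite := by
  unfold finitaryWithTranslations at hq
  induction hq using Subgroup.closure_induction with
  | mem x hx =>
    rcases hx with hx | ⟨g, rfl⟩
    · exact ⟨1, by simpa using hx⟩
    · exact ⟨g, by simp⟩
  | one => exact ⟨1, by simp⟩
  | mul x y _ _ hx hy =>
    obtain ⟨a, ha⟩ := hx
    obtain ⟨b, hb⟩ := hy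
    exact ⟨a * b, lefaux_comp x y a b ha hb⟩
  | inv x _ hx =>
    obtain ⟨a, ha⟩ := hx
    refine ⟨a⁻¹, (ha.image x).subset ?_⟩
    intro y hy
    refine ⟨x⁻¹ y, ?_, by simp⟩
    intro h
    apply hy
    have e : x (x⁻¹ y) = y := by simp
    rw [e] at h
    rw [eq_inv_mul_iff_mul_eq, ← h]

theorem lefaux_k (K : Type*) [Group K] : ∃ k : finitaryWithTranslations K → K,
    (∀ q, {x | q.1 x ≠ k q * x}.Finite) ∧ ∀ f g, k (f * g) = k f * k g := by
  rcases finite_or_infinite K with hK | hK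
  · exact ⟨fun _ => 1, fun q => Set.toFinite _, by simp⟩
  · choose k hk using fun q : finitaryWithTranslations K => lefaux_ex q.1 q.2
    refine ⟨k, hk, fun f g => ?_⟩
    have h := (hk (f * g)).union (lefaux_comp f.1 g.1 _ _ (hk f) (hk g))
    obtain ⟨x, hx⟩ := h.exists_notMem
    simp only [Set.mem_union, Set.mem_ofPred_eq, not_or, not_not, Subgroup.coe_mul] at hx
    exact mul_right_cancel (hx.1.symm.trans hx.2)

/-- If `K` is a finitely generated residually finite group, then the group `Q` generated by the
finitary permutations of `K` and the left translations by elements of `K` is an LEF group: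
for every finite subset `F ⊆ Q` there are a finite group `H` and a map `Ψ : Q → H` injective
on `F` with `Ψ(fg) = Ψ(f)Ψ(g)` for all `f, g ∈ F`. -/
theorem lef_finitaryWithTranslations {K : Type*} [Group K] (hfg : Group.FG K)
    (hrf : ∀ g : K, g ≠ 1 → ∃ (H : Type) (_ : Group H) (_ : Finite H) (φ : K →* H), φ g ≠ 1) :
    ∀ F : Finset (finitaryWithTranslations K),
      ∃ (H : Type) (_ : Group H) (_ : Finite H) (Ψ : finitaryWithTranslations K → H),
        Set.InjOn Ψ ↑F ∧ ∀ f ∈ F, ∀ g ∈ F, Ψ (f * g) = Ψ f * Ψ g := by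
  classical
  intro F
  obtain ⟨k, hk, hmul⟩ := lefaux_k K
  let E : Set (finitaryWithTranslations K) := ↑F ∪ Set.image2 (· * ·) ↑F ↑F
  have hE : E.Finite := F.finite_toSet.union (F.finite_toSet.image2 _ F.finite_toSet)
  have hw : ∀ f g : finitaryWithTranslations K, ∃ x, f.1 x = g.1 x → f = g := by
    intro f g
    by_contra! h
    exact (h 1).2 (Subtype.ext (Equiv.ext fun x => (h x).1))
  choose w hw using hw
  let B : Set K := (⋃ q ∈ E, {x | q.1 x ≠ k q * x}) ∪ Set.image2 w ↑F ↑F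
  have hB : B.Finite :=
    (hE.biUnion fun q _ => hk q).union (F.finite_toSet.image2 _ F.finite_toSet)
  let T : Set K := B ∪ ⋃ q ∈ E, q.1 '' B
  have hT : T.Finite := hB.union (hE.biUnion fun q _ => hB.image _)
  obtain ⟨H, _, _, φ, hφ⟩ := lefaux_inj hrf T hT
  have hBT : B ⊆ T := Set.subset_union_left
  have hqT : ∀ q ∈ E, ∀ x ∈ B, q.1 x ∈ T := fun q hq x hx =>
    Or.inr (Set.mem_biUnion hq ⟨x, hx, rfl⟩)
  have hoff : ∀ q ∈ E, ∀ x, x ∉ B → q.1 x = k q * x := by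
    intro q hq x hx
    by_contra hne
    exact hx (Or.inl (Set.mem_biUnion hq hne))
  have hex : ∀ q : finitaryWithTranslations K, ∃ τ : Equiv.Perm H, q ∈ E →
      (∀ x ∈ B, τ (φ x) = φ (q.1 x)) ∧ ∀ y, (∀ x ∈ B, φ x ≠ y) → τ y = φ (k q) * y := by
    intro q
    by_cases hq : q ∈ E
    · obtain ⟨τ, h⟩ := lefaux_ext φ B q.1 (k q) (hoff q hq) (hφ.mono hBT)
        (hφ.mono (by rintro _ ⟨x, hx, rfl⟩; exact hqT q hq x hx))
      exact ⟨τ, fun _ => h⟩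
    · exact ⟨1, fun h => absurd h hq⟩
  choose Ψ hΨ using hex
  have hFE : ∀ f ∈ F, f ∈ E := fun f hf => Or.inl hf
  refine ⟨Equiv.Perm H, inferInstance, inferInstance, Ψ, ?_, ?_⟩
  · intro f hf g hg hfg
    have hx : w f g ∈ B := Or.inr ⟨f, hf, g, hg, rfl⟩
    apply hw f g
    apply hφ (hqT f (hFE f hf) _ hx) (hqT g (hFE g hg) _ hx)
    rw [← (hΨ f (hFE f hf)).1 _ hx, ← (hΨ g (hFE g hg)).1 _ hx, hfg]
  · intro f hf g hg
    have hfE := hFE f hf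
    have hgE := hFE g hg
    have hfgE : f * g ∈ E := Or.inr ⟨f, hf, g, hg, rfl⟩
    ext y
    rw [Equiv.Perm.mul_apply]
    by_cases hy : ∃ x ∈ B, φ x = y
    · obtain ⟨x, hx, rfl⟩ := hy
      rw [(hΨ _ hfgE).1 x hx, (hΨ _ hgE).1 x hx, Subgroup.coe_mul, Equiv.Perm.mul_apply]
      by_cases hz : g.1 x ∈ B
      · rw [(hΨ _ hfE).1 _ hz]
      · rw [(hΨ _ hfE).2, hoff f hfE _ hz, map_mul]
        intro x' hx' h
        exact hz (hφ (hBT hx') (hqT g hgE x hx) h ▸ hx')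
    · push Not at hy
      rw [(hΨ _ hfgE).2 y hy, (hΨ _ hgE).2 y hy]
      by_cases hz : ∃ z ∈ B, φ z = φ (k g) * y
      · obtain ⟨z, hzB, hz⟩ := hz
        have hyx : y = φ ((k g)⁻¹ * z) := by
          rw [map_mul, hz, map_inv, inv_mul_cancel_left]
        have hxB : (k g)⁻¹ * z ∉ B := fun h => hy _ h hyx.symm
        have h1 := hoff g hgE _ hxB
        rw [mul_inv_cancel_left] at h1
        have h2 := hoff _ hfgE _ hxB
        rw [Subgroup.coe_mul, Equiv.Perm.mul_apply, h1] at h2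
        rw [← hz, (hΨ _ hfE).1 _ hzB, h2, hyx, ← map_mul]
      · push Not at hz
        rw [(hΨ _ hfE).2 _ hz, hmul, map_mul, mul_assoc]
end

section
/- There exists a finitely generated group Q which is sofic but not residually amenable: Q admits no family of homomorphisms into groups satisfying the Følner condition that separates the elements of Q; i.e., there exists some g ∈ Q with g ≠ 1 such that every group homomorphism φ from Q into a group satisfying the Følner condition has φ(g) = 1. -/
open Filter

namespace SoficNRA

/-- The free group of rank two. -/
abbrev Γ := FreeGroup Bool

/-- Ball in the free group. -/
abbrev Ball (n : ℕ) := {g : Γ // g.norm ≤ n}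

instance (n : ℕ) : Finite (Ball n) := by
  have : Set.Finite {l : List (Bool × Bool) | l.length ≤ n} := List.finite_length_le _ n
  have := this.to_subtype
  refine Finite.of_injective
    (fun g : Ball n => (⟨g.1.toWord, g.2⟩ : {l : List (Bool × Bool) | l.length ≤ n})) ?_
  intro g h hgh
  exact Subtype.ext (FreeGroup.toWord_injective (congrArg Subtype.val hgh))

noncomputable instance (n : ℕ) : Fintype (Ball n) := Fintype.ofFinite _

/-- Partial translation of the ball by a generator. -/
def partialTrans (n : ℕ) (i : Bool) :
    {x : Ball n // (FreeGroup.of i * x.1).norm ≤ n} ≃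
      {x : Ball n // ((FreeGroup.of i)⁻¹ * x.1).norm ≤ n} where
  toFun x := ⟨⟨FreeGroup.of i * x.1.1, x.2⟩, by simpa using x.1.2⟩
  invFun x := ⟨⟨(FreeGroup.of i)⁻¹ * x.1.1, x.2⟩, by simpa using x.1.2⟩
  left_inv x := by ext; simp
  right_inv x := by ext; simp

/-- A permutation of the ball extending the partial translation. -/
noncomputable def genPerm (n : ℕ) (i : Bool) : Equiv.Perm (Ball n) := by
  classical exact (partialTrans n i).extendSubtype

lemma genPerm_apply (n : ℕ) (i : Bool) (x : Ball n) (h : (FreeGroup.of i * x.1).norm ≤ n) :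
    genPerm n i x = ⟨FreeGroup.of i * x.1, h⟩ := by
  classical
  unfold genPerm
  exact Equiv.extendSubtype_apply_of_mem (partialTrans n i) x h

lemma genPerm_inv_apply (n : ℕ) (i : Bool) (x : Ball n)
    (h : ((FreeGroup.of i)⁻¹ * x.1).norm ≤ n) :
    (genPerm n i)⁻¹ x = ⟨(FreeGroup.of i)⁻¹ * x.1, h⟩ := by
  rw [Equiv.Perm.inv_eq_iff_eq, genPerm_apply]
  · ext; simp
  · simpa using x.2

/-- Finite quotients of the free group. -/
noncomputable def π (n : ℕ) : Γ →* Equiv.Perm (Ball n) := FreeGroup.lift (genPerm n)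

lemma π_mk (n : ℕ) (L : List (Bool × Bool)) (hL : L.length ≤ n) :
    π n (FreeGroup.mk L) ⟨1, by simp⟩ = ⟨FreeGroup.mk L, FreeGroup.norm_mk_le.trans hL⟩ := by
  induction L with
  | nil =>
    have : π n (FreeGroup.mk []) = 1 := map_one (π n)
    rw [this]; rfl
  | cons x L ih =>
    have hL' : L.length ≤ n := by simp at hL; omega
    have e : FreeGroup.mk (x :: L) = FreeGroup.mk [x] * FreeGroup.mk L := by
      rw [FreeGroup.mul_mk]; rfl
    have hn : (FreeGroup.mk [x] * FreeGroup.mk L).norm ≤ n := by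
      rw [← e]; exact FreeGroup.norm_mk_le.trans hL
    simp only [e, map_mul, Equiv.Perm.mul_apply, ih hL']
    obtain ⟨i, b⟩ := x
    cases b
    · have e2 : FreeGroup.mk [(i, false)] = (FreeGroup.of i)⁻¹ := by
        simp [FreeGroup.of, FreeGroup.inv_mk, FreeGroup.invRev]
      simp only [e2] at hn ⊢
      rw [map_inv]
      have : π n (FreeGroup.of i) = genPerm n i := by simp [π]
      rw [this, genPerm_inv_apply _ _ _ hn]
    · change π n (FreeGroup.of i) _ = _
      have : π n (FreeGroup.of i) = genPerm n i := by simp [π]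
      rw [this, genPerm_apply _ _ _ hn]
      rfl

lemma π_eventually_ne_one (g : Γ) (hg : g ≠ 1) : ∀ᶠ n in atTop, π n g ≠ 1 := by
  filter_upwards [eventually_ge_atTop g.norm] with n hn h
  have := π_mk n g.toWord hn
  simp only [FreeGroup.mk_toWord, h, Equiv.Perm.one_apply] at this
  exact hg (congrArg Subtype.val this).symm

lemma π_eventually_ne {g h : Γ} (hg : g ≠ h) : ∀ᶠ n in atTop, π n g ≠ π n h := by
  filter_upwards [π_eventually_ne_one (g * h⁻¹) (by rwa [Ne, mul_inv_eq_one])] with n hn e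
  apply hn
  rw [map_mul, e, ← map_mul, mul_inv_cancel, map_one]

/-- The finite groups. -/
abbrev K (n : ℕ) := Equiv.Perm (Ball n)

abbrev P := Equiv.Perm Γ × ((n : ℕ) → Equiv.Perm (K n))

/-- Approximable pairs. -/
def Good : Subgroup P where
  carrier := {q | (∀ p, ∀ᶠ n in atTop, π n (q.1 p) = q.2 n (π n p)) ∧
    ∃ (w : Γ) (T : Set Γ), T.Finite ∧ (∀ p ∉ T, q.1 p = w * p) ∧
      ∀ n, ∀ k ∉ π n '' T, q.2 n k = π n w * k}
  one_mem' := by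
    refine ⟨fun p => by simp, 1, ∅, by simp, by simp, by simp⟩
  mul_mem' := by
    rintro a b ⟨ha, w, T, hT, h1, h2⟩ ⟨hb, w', T', hT', h1', h2'⟩
    refine ⟨fun p => ?_, w * w', T' ∪ (fun t => w'⁻¹ * t) '' T, hT'.union (hT.image _), ?_, ?_⟩
    · filter_upwards [hb p, ha (b.1 p)] with n e1 e2
      simp [e1, e2]
    · intro p hp
      simp only [Set.mem_union, not_or] at hp
      have : w' * p ∉ T := fun h => hp.2 ⟨_, h, by simp⟩
      simp [h1' p hp.1, h1 _ this, mul_assoc]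
    · intro n k hk
      rw [Set.image_union, Set.mem_union, not_or] at hk
      have : π n w' * k ∉ π n '' T := by
        rintro ⟨t, ht, e⟩
        exact hk.2 ⟨_, ⟨t, ht, rfl⟩, by simp [e]⟩
      have e1 := h2' n k hk.1
      have e2 := h2 n _ this
      change a.2 n (b.2 n k) = _
      rw [e1, e2, map_mul, mul_assoc]
  inv_mem' := by
    rintro a ⟨ha, w, T, hT, h1, h2⟩
    refine ⟨fun p => ?_, w⁻¹, (fun t => w * t) '' T, hT.image _, ?_, ?_⟩
    · filter_upwards [ha (a.1⁻¹ p)] with n e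
      change _ = (a.2 n)⁻¹ _
      rw [Equiv.Perm.eq_inv_iff_eq]
      simpa using e.symm
    · intro p hp
      have : w⁻¹ * p ∉ T := fun h => hp ⟨_, h, by simp⟩
      change a.1⁻¹ p = _
      rw [Equiv.Perm.inv_eq_iff_eq, h1 _ this]; simp
    · intro n k hk
      have : π n w⁻¹ * k ∉ π n '' T := by
        rintro ⟨t, ht, e⟩
        exact hk ⟨_, ⟨t, ht, rfl⟩, by simp [e]⟩
      change (a.2 n)⁻¹ k = _
      rw [Equiv.Perm.inv_eq_iff_eq, h2 _ _ this]; simp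

lemma good_trans (g : Γ) :
    ((Equiv.mulLeft g, fun n => Equiv.mulLeft (π n g)) : P) ∈ Good := by
  refine ⟨fun p => by simp, g, ∅, by simp, by simp, by simp⟩

lemma good_swap (p q : Γ) : ∃ s, ((Equiv.swap p q, s) : P) ∈ Good := by
  classical
  refine ⟨fun n => Equiv.swap (π n p) (π n q), ?_, 1, {p, q}, by simp, ?_, ?_⟩
  · intro x
    by_cases hp : x = p
    · subst hp; simp
    by_cases hq : x = q
    · subst hq; simp
    filter_upwards [π_eventually_ne hp, π_eventually_ne hq] with n e1 e2
    simp [Equiv.swap_apply_of_ne_of_ne hp hq, Equiv.swap_apply_of_ne_of_ne e1 e2]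
  · intro x hx
    simp only [Set.mem_insert_iff, Set.mem_singleton_iff, not_or] at hx
    simp [Equiv.swap_apply_of_ne_of_ne hx.1 hx.2]
  · intro n k hk
    have h1 : k ≠ π n p := fun h => hk ⟨p, by simp, h.symm⟩
    have h2 : k ≠ π n q := fun h => hk ⟨q, by simp, h.symm⟩
    simp [Equiv.swap_apply_of_ne_of_ne h1 h2]

lemma good_one {s : (n : ℕ) → Equiv.Perm (K n)} (h : ((1, s) : P) ∈ Good) :
    ∀ᶠ n in atTop, s n = 1 := by
  obtain ⟨h0, w, T, hT, h1, h2⟩ := h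
  have hw : w = 1 := by
    obtain ⟨p, hp⟩ := hT.exists_notMem
    have := h1 p hp
    simpa using this
  subst hw
  have : ∀ᶠ n in atTop, ∀ p ∈ T, π n ((1 : Equiv.Perm Γ) p) = s n (π n p) :=
    (eventually_all_finite hT).2 fun p _ => h0 p
  filter_upwards [this] with n hn
  ext1 k
  by_cases hk : k ∈ π n '' T
  · obtain ⟨p, hp, rfl⟩ := hk
    exact (hn p hp).symm
  · simpa using h2 n k hk

lemma good_ne_one {q : P} (h : q ∈ Good) (hq : q.1 ≠ 1) : ∀ᶠ n in atTop, q.2 n ≠ 1 := by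
  obtain ⟨h0, -⟩ := h
  obtain ⟨p, hp⟩ : ∃ p, q.1 p ≠ p := by
    by_contra! hc
    exact hq (Equiv.ext hc)
  filter_upwards [h0 p, π_eventually_ne hp] with n e1 e2 e3
  apply e2
  rw [e1, e3]; rfl

/-- Any subgroup of `Perm Γ` whose elements are approximable is sofic. -/
lemma sofic_of_good (Q : Subgroup (Equiv.Perm Γ)) (hQ : Q ≤ Good.map (MonoidHom.fst _ _)) :
    IsSofic Q := by
  intro F ε hε hε1
  have : ∀ q : Q, ∃ s : (n : ℕ) → Equiv.Perm (K n), ((q.1, s) : P) ∈ Good := by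
    intro q
    obtain ⟨⟨a, s⟩, hs, e⟩ := hQ q.2
    simp only [MonoidHom.coe_fst] at e
    exact ⟨s, e ▸ hs⟩
  choose s hs using this
  have H1 : ∀ e f : Q, ∀ᶠ n in atTop, s (e * f) n = s e n * s f n := by
    intro e f
    have h := Good.mul_mem (Good.mul_mem (hs e) (hs f)) (Good.inv_mem (hs (e * f)))
    have h' : ((1, s e * s f * (s (e * f))⁻¹) : P) ∈ Good := by
      convert h using 1
      ext1 <;> simp
    filter_upwards [good_one h'] with n hn
    have hn : s e n * s f n * (s (e * f) n)⁻¹ = 1 := hn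
    exact (mul_inv_eq_one.1 hn).symm
  have H2 : ∀ᶠ n in atTop, s 1 n = 1 := good_one (hs 1)
  have H3 : ∀ e : Q, e ≠ 1 → ∀ᶠ n in atTop, s e n ≠ 1 := fun e he =>
    good_ne_one (hs e) (by simpa using he)
  have H1' : ∀ᶠ n in atTop, ∀ e ∈ F, ∀ f ∈ F, s (e * f) n = s e n * s f n :=
    (eventually_all_finset F).2 fun e _ => (eventually_all_finset F).2 fun f _ => H1 e f
  have H3' : ∀ᶠ n in atTop, ∀ e ∈ F, e ≠ 1 → s e n ≠ 1 := by
    refine (eventually_all_finset F).2 fun e _ => ?_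
    by_cases he : e = 1
    · simp [he]
    · simpa [he] using H3 e he
  obtain ⟨n, h1, h2, h3⟩ := (H1'.and (H2.and H3')).exists
  refine ⟨Equiv.Perm (K n), Fintype.ofFinite _, ⟨1⟩, fun q a => a * s q n, ?_, ?_, ?_⟩
  · intro e he f hf
    unfold EpsSimilar
    have : IsEmpty {a : Equiv.Perm (K n) // a * s (e * f) n ≠ a * s e n * s f n} :=
      ⟨fun a => a.2 (by simp only [h1 e he f hf, mul_assoc])⟩
    rw [Nat.card_of_isEmpty]
    push_cast
    positivity
  · unfold EpsSimilar
    have : IsEmpty {a : Equiv.Perm (K n) // a * s 1 n ≠ id a} :=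
      ⟨fun a => a.2 (by simp only [h2, mul_one, id])⟩
    rw [Nat.card_of_isEmpty]
    push_cast
    positivity
  · intro e he he1 hsim
    unfold EpsSimilar at hsim
    have hall : ∀ a : Equiv.Perm (K n), a * s e n ≠ id a := fun a ha =>
      h3 e he he1 (by simpa using ha)
    rw [Nat.card_congr (Equiv.subtypeUnivEquiv hall), ← @Nat.card_eq_fintype_card _ (Fintype.ofFinite _)] at hsim
    have : 0 < Nat.card (Equiv.Perm (K n)) := Nat.card_pos
    have : (0 : ℝ) < Nat.card (Equiv.Perm (K n)) := by exact_mod_cast this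
    nlinarith

/-- An amenable group does not contain a free group of rank two. -/
lemma not_folner_of_free {M : Type} [Group M] (j : Γ →* M) (hj : Function.Injective j)
    (hM : FolnerCondition M) : False := by
  classical
  obtain ⟨δ, hδ⟩ : ∃ δ : M → Γ, ∀ m g, δ (m * (j g)⁻¹) = g * δ m := by
    have hrep : ∀ m : M, ∃ g : Γ, j g = m⁻¹ * (QuotientGroup.mk (s := j.range) m).out := by
      intro m
      have : m⁻¹ * (QuotientGroup.mk (s := j.range) m).out ∈ j.range :=
        QuotientGroup.eq.1 (Quotient.out_eq _).symm
      exact this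
    choose δ hδ using hrep
    refine ⟨δ, fun m g => hj ?_⟩
    have : (QuotientGroup.mk (s := j.range) (m * (j g)⁻¹)) = QuotientGroup.mk m := by
      rw [QuotientGroup.eq]
      simp
    rw [hδ, this, map_mul, hδ]
    group
  obtain ⟨A, hA, hF⟩ := hM {(j (FreeGroup.of true))⁻¹, (j (FreeGroup.of false))⁻¹} (1/4)
    (by norm_num)
  let S : Bool × Bool → Finset M := fun w => A.filter fun m => (δ m).toWord[0]? = some w
  have key : ∀ x : Bool, ((A.card : ℝ)) ≤ (S (x, false)).card + (S (x, true)).card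
      + (1/4) * A.card := by
    intro x
    have hx := hF (j (FreeGroup.of x))⁻¹ (by cases x <;> simp)
    have e : (((fun a => a * (j (FreeGroup.of x))⁻¹) '' (A : Set M)) \ (A : Set M)) =
        ((A.image (fun a => a * (j (FreeGroup.of x))⁻¹) \ A : Finset M) : Set M) := by
      simp
    rw [e, Set.ncard_coe_finset] at hx
    set D := A.image (fun a => a * (j (FreeGroup.of x))⁻¹) \ A with hD
    have h1 : ((A \ S (x, false)).image (fun a => a * (j (FreeGroup.of x))⁻¹)) ⊆
        S (x, true) ∪ D := by
      intro m hm
      obtain ⟨a, ha, rfl⟩ := Finset.mem_image.1 hm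
      rw [Finset.mem_sdiff] at ha
      by_cases hmA : a * (j (FreeGroup.of x))⁻¹ ∈ A
      · refine Finset.mem_union_left _ (Finset.mem_filter.2 ⟨hmA, ?_⟩)
        rw [hδ]
        refine FreeGroup.startsWith_mk_mul (w := (x, true)) (δ a) ?_
        intro h
        exact ha.2 (Finset.mem_filter.2 ⟨ha.1, h⟩)
      · exact Finset.mem_union_right _ (Finset.mem_sdiff.2
          ⟨Finset.mem_image_of_mem _ ha.1, hmA⟩)
    have h2 := Finset.card_le_card h1
    rw [Finset.card_image_of_injective _ (mul_left_injective _)] at h2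
    have h3 := h2.trans (Finset.card_union_le _ _)
    have h4 : A.card ≤ (S (x, false)).card + (A \ S (x, false)).card := by
      have := Finset.card_sdiff_add_card_inter A (S (x, false))
      have h5 := Finset.card_le_card (Finset.inter_subset_right (s₁ := A) (s₂ := S (x, false)))
      omega
    have h6 : A.card ≤ (S (x, false)).card + ((S (x, true)).card + D.card) := by omega
    have h7 : (A.card : ℝ) ≤ (S (x, false)).card + ((S (x, true)).card + D.card) := by
      exact_mod_cast h6
    linarith
  have hsum : ∑ w : Bool × Bool, (S w).card ≤ A.card := by
    rw [← Finset.card_biUnion]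
    · apply Finset.card_le_card
      intro m hm
      obtain ⟨w, -, hw⟩ := Finset.mem_biUnion.1 hm
      exact (Finset.mem_filter.1 hw).1
    · intro w _ w' _ hne
      rw [Function.onFun, Finset.disjoint_left]
      intro m h h'
      have a1 := (Finset.mem_filter.1 h).2
      have a2 := (Finset.mem_filter.1 h').2
      rw [a1] at a2
      exact hne (Option.some.inj a2)
  simp only [Fintype.sum_prod_type, Fintype.sum_bool] at hsum
  have hsum' : (((S (true, true)).card : ℝ) + (S (true, false)).card +
    ((S (false, true)).card + (S (false, false)).card)) ≤ A.card := by exact_mod_cast hsum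
  have := key true
  have := key false
  have : (0 : ℝ) < A.card := by exact_mod_cast hA.card_pos
  linarith

/-- Base points. -/
def x1 : Γ := FreeGroup.of true
def x2 : Γ := FreeGroup.of false

/-- The generators of the group. -/
def gens : Set (Equiv.Perm Γ) :=
  {Equiv.mulLeft x1, Equiv.mulLeft x2, Equiv.swap 1 x1, Equiv.swap x1 x2}

/-- The group. -/
def Q : Subgroup (Equiv.Perm Γ) := Subgroup.closure gens

lemma Q_fg : Group.FG Q := by
  rw [Group.fg_iff_subgroup_fg]
  refine ⟨(show gens.Finite by unfold gens; exact Set.toFinite _).toFinset, by simp [Q]⟩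

lemma Q_sofic : IsSofic Q := by
  apply sofic_of_good
  unfold Q
  rw [Subgroup.closure_le]
  rintro q (rfl | rfl | rfl | rfl)
  · exact ⟨_, good_trans _, rfl⟩
  · exact ⟨_, good_trans _, rfl⟩
  · obtain ⟨s, hs⟩ := good_swap 1 x1
    exact ⟨_, hs, rfl⟩
  · obtain ⟨s, hs⟩ := good_swap x1 x2
    exact ⟨_, hs, rfl⟩

/-- Two transpositions in the group. -/
def s1 : Q := ⟨Equiv.swap 1 x1, Subgroup.subset_closure (by simp [gens])⟩
def s2 : Q := ⟨Equiv.swap x1 x2, Subgroup.subset_closure (by simp [gens])⟩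

/-- Translations. -/
def lam : Γ →* Q := FreeGroup.lift fun b => match b with
  | true => ⟨Equiv.mulLeft x1, Subgroup.subset_closure (by simp [gens])⟩
  | false => ⟨Equiv.mulLeft x2, Subgroup.subset_closure (by simp [gens])⟩

lemma lam_apply (g p : Γ) : (lam g).1 p = g * p := by
  have : Q.subtype.comp lam = MulAction.toPermHom Γ Γ := by
    ext b p
    cases b <;> simp [lam, x1, x2]
  exact congrArg (fun f : Γ →* Equiv.Perm Γ => f g p) this

lemma x1_ne : x1 ≠ 1 := FreeGroup.of_ne_one _
lemma x2_ne : x2 ≠ 1 := FreeGroup.of_ne_one _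
lemma x12_ne : x1 ≠ x2 := fun h => by simpa using FreeGroup.of_injective h

/-- The commutator of the two transpositions, a 3-cycle. -/
def cyc : Q := s1 * s2 * (s2 * s1)⁻¹

lemma comm_ne : cyc ≠ 1 := by
  intro h
  rw [cyc, mul_inv_eq_one] at h
  have h1 : Equiv.swap 1 x1 (Equiv.swap x1 x2 1) = Equiv.swap x1 x2 (Equiv.swap 1 x1 1) :=
    congrArg (fun q : Q => q.1 1) h
  rw [Equiv.swap_apply_of_ne_of_ne x1_ne.symm x2_ne.symm, Equiv.swap_apply_left,
    Equiv.swap_apply_left] at h1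
  exact x12_ne h1

/-- A power of a nontrivial element avoids finitely many elements. -/
lemma exists_pow_avoid (w : Γ) (hw : w ≠ 1) (T : Set Γ) (hT : T.Finite) : ∃ n : ℕ, w ^ n ∉ T := by
  by_contra! h
  have hinj : Function.Injective fun n : ℕ => w ^ n := IsMulTorsionFree.pow_right_injective hw
  exact Set.infinite_range_of_injective hinj (hT.subset (by rintro _ ⟨n, rfl⟩; exact h n))

lemma killed {M : Type} [Group M] (φ : Q →* M) (w : Γ) (hw : w ≠ 1) (h : φ (lam w) = 1) :
    φ cyc = 1 := by
  obtain ⟨n, hn⟩ := exists_pow_avoid w hw {x1, x2, 1, x2 * x1⁻¹} (Set.toFinite _)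
  simp only [Set.mem_insert_iff, Set.mem_singleton_iff, not_or] at hn
  set v := w ^ n with hv
  have hφ : φ (lam v) = 1 := by rw [hv, map_pow, map_pow, h, one_pow]
  set t : Q := lam v * s1 * (lam v)⁻¹ with ht
  have ht1 : φ t = φ s1 := by simp [ht, hφ]
  have ht2 : t.1 = Equiv.swap v (v * x1) := by
    have : t.1 = (lam v).1 * Equiv.swap 1 x1 * (lam v).1⁻¹ := rfl
    rw [this, ← Equiv.swap_apply_apply, lam_apply, lam_apply, mul_one]
  have hc : t * s2 = s2 * t := by
    apply Subtype.ext
    change t.1 * Equiv.swap x1 x2 = Equiv.swap x1 x2 * t.1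
    rw [ht2]
    refine (Equiv.Perm.disjoint_swap_swap ?_).commute
    have a3 : v * x1 ≠ x1 := fun e => hn.2.2.1 (by simpa using e)
    have a4 : v * x1 ≠ x2 := fun e => hn.2.2.2 (by rw [← e]; simp)
    have a5 : v ≠ v * x1 := fun e => x1_ne (by simpa using e.symm)
    simp [hn.1, hn.2.1, a3, a4, a5, x12_ne]
  rw [cyc, map_mul, map_inv, mul_inv_eq_one, map_mul, map_mul, ← ht1, ← map_mul, hc, map_mul]

end SoficNRA

/-- There exists a finitely generated sofic group that is not residually amenable: some
nontrivial element is killed by every homomorphism into a group satisfying the Følner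
condition. -/
theorem exists_fg_sofic_not_residuallyAmenable :
    ∃ (Q : Type) (_ : Group Q), Group.FG Q ∧ IsSofic Q ∧
      ∃ g : Q, g ≠ 1 ∧
        ∀ (M : Type) (_ : Group M), FolnerCondition M → ∀ φ : Q →* M, φ g = 1 := by
  refine ⟨SoficNRA.Q, inferInstance, SoficNRA.Q_fg, SoficNRA.Q_sofic,
    SoficNRA.cyc, SoficNRA.comm_ne, ?_⟩
  intro M _ hM φ
  by_contra hne
  refine SoficNRA.not_folner_of_free (φ.comp SoficNRA.lam) ?_ hM
  rw [injective_iff_map_eq_one]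
  intro w hw
  by_contra hw1
  exact hne (SoficNRA.killed φ w hw1 hw)
end
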